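/- Let α be a value Ψ-PER, let M, M' ∈ T(Ψ), and let S be a set of morphisms with codomain Ψ that is closed under precomposition (if ψ : Ψ' → Ψ belongs to S and ψ' : Ψ'' → Ψ' is any morphism, then ψ ∘ ψ' belongs to S). If for every ψ ∈ S there exists a term M'' such that M⟨ψ⟩ reaches M'' under the reflexive-transitive closure of ↦ and Tm(α)_ψ(M'', M'⟨ψ⟩) holds, then Tm(α)_ψ(M⟨ψ⟩, M'⟨ψ⟩) holds for every ψ ∈ S. -/

import Mathlib

open CategoryTheory

universe u v w

/-- A contravariant action of a category of dimension contexts on terms,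
together with a deterministic step relation on terms at each context. -/
structure TermSystem (C : Type u) [Category.{v} C] where
  T : C → Type w
  sub : ∀ {Ψ' Ψ : C}, (Ψ' ⟶ Ψ) → T Ψ → T Ψ'
  sub_id : ∀ {Ψ : C} (M : T Ψ), sub (𝟙 Ψ) M = M
  sub_comp : ∀ {Ψ'' Ψ' Ψ : C} (ψ' : Ψ'' ⟶ Ψ') (ψ : Ψ' ⟶ Ψ) (M : T Ψ),
      sub ψ' (sub ψ M) = sub (ψ' ≫ ψ) M
  step : ∀ {Ψ : C}, T Ψ → T Ψ → Prop
  step_det : ∀ {Ψ : C} {M N N' : T Ψ}, step M N → step M N' → N = N'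

namespace TermSystem

variable {C : Type u} [Category.{v} C] (S : TermSystem C)

/-- A term is a value if it takes no step. -/
def IsValue {Ψ : C} (M : S.T Ψ) : Prop := ∀ N, ¬ S.step M N

/-- `M ⇓ V`: `M` reaches `V` by the reflexive-transitive closure of the step
relation, and `V` is a value. -/
def Eval {Ψ : C} (M V : S.T Ψ) : Prop :=
  Relation.ReflTransGen S.step M V ∧ S.IsValue V

/-- A value `Ψ`-PER: a family of symmetric transitive relations, indexed by
morphisms into `Ψ`, relating only values. -/
def IsValuePER {Ψ : C}
    (α : ∀ Ψ' : C, (Ψ' ⟶ Ψ) → S.T Ψ' → S.T Ψ' → Prop) : Prop :=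
  (∀ (Ψ' : C) (ψ : Ψ' ⟶ Ψ) (M M' : S.T Ψ'), α Ψ' ψ M M' → α Ψ' ψ M' M) ∧
  (∀ (Ψ' : C) (ψ : Ψ' ⟶ Ψ) (M M' M'' : S.T Ψ'),
      α Ψ' ψ M M' → α Ψ' ψ M' M'' → α Ψ' ψ M M'') ∧
  (∀ (Ψ' : C) (ψ : Ψ' ⟶ Ψ) (M M' : S.T Ψ'),
      α Ψ' ψ M M' → S.IsValue M ∧ S.IsValue M')

/-- The coherent extension `Tm(α)_ψ` of a family `α` to terms. -/
def Tm {Ψ : C} (α : ∀ Ψ' : C, (Ψ' ⟶ Ψ) → S.T Ψ' → S.T Ψ' → Prop)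
    {Ψ' : C} (ψ : Ψ' ⟶ Ψ) (M M' : S.T Ψ') : Prop :=
  ∀ (Ψ₁ Ψ₂ : C) (ψ₁ : Ψ₁ ⟶ Ψ') (ψ₂ : Ψ₂ ⟶ Ψ₁),
    ∃ (M₁ : S.T Ψ₁) (M₂ M₁₂ : S.T Ψ₂) (M₁' : S.T Ψ₁) (M₂' M₁₂' : S.T Ψ₂),
      S.Eval (S.sub ψ₁ M) M₁ ∧ S.Eval (S.sub ψ₂ M₁) M₂ ∧
      S.Eval (S.sub (ψ₂ ≫ ψ₁) M) M₁₂ ∧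
      S.Eval (S.sub ψ₁ M') M₁' ∧ S.Eval (S.sub ψ₂ M₁') M₂' ∧
      S.Eval (S.sub (ψ₂ ≫ ψ₁) M') M₁₂' ∧
      α Ψ₂ (ψ₂ ≫ ψ₁ ≫ ψ) M₂ M₂' ∧ α Ψ₂ (ψ₂ ≫ ψ₁ ≫ ψ) M₂ M₁₂ ∧
      α Ψ₂ (ψ₂ ≫ ψ₁ ≫ ψ) M₂' M₁₂'

end TermSystem

/-!
The first half of coherence for `M⟨ψ⟩` along `ψ₁`, `ψ₂` (evaluate at `ψ₁`, then at `ψ₂`) is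
inherited by head expansion from the reduct of `M⟨ψ₁ ≫ ψ⟩`, using the substitutions `𝟙`, `ψ₂`.
The same hypothesis cannot evaluate `M⟨ψ₂ ≫ ψ₁ ≫ ψ⟩`, since steps need not commute with
substitution; this comes instead from the reduct of `M⟨ψ₂ ≫ ψ₁ ≫ ψ⟩`, which closure under
precomposition provides. The two resulting values of `M` are related because both are related to
the value of `M'⟨ψ₂ ≫ ψ₁ ≫ ψ⟩`, which is unique by determinism (`TermSystem.Eval.unique`).
-/

namespace TermSystem

variable {C : Type u} [Category.{v} C] {S : TermSystem C}

theorem Eval.expand {Ψ : C} {M N V : S.T Ψ} (h : Relation.ReflTransGen S.step M N)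
    (hV : S.Eval N V) : S.Eval M V :=
  ⟨h.trans hV.1, hV.2⟩

theorem IsValue.eq_of_steps {Ψ : C} {V W : S.T Ψ} (hV : S.IsValue V)
    (h : Relation.ReflTransGen S.step V W) : V = W := by
  rcases h.cases_head with rfl | ⟨N, hN, -⟩
  · rfl
  · exact (hV N hN).elim

theorem Eval.unique {Ψ : C} {M V W : S.T Ψ} (hV : S.Eval M V) (hW : S.Eval M W) : V = W := by
  have hdet : Relator.RightUnique (S.step (Ψ := Ψ)) := fun _ _ _ h h' => S.step_det h h'
  rcases Relation.ReflTransGen.total_of_right_unique hdet hV.1 hW.1 with h | h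
  · exact hV.2.eq_of_steps h
  · exact (hW.2.eq_of_steps h).symm

end TermSystem

/-- **Restricted expansion lemma.** Given a sieve-like collection of morphisms
into `Ψ` (closed under precomposition), if every aspect of `M` along a morphism
in the collection reduces to a term related to the corresponding aspect of `M'`
by `Tm(α)`, then the aspects of `M` and `M'` along every morphism in the
collection are related by `Tm(α)`. -/
theorem restricted_expansion {C : Type u} [Category.{v} C] (S : TermSystem C)
    {Ψ : C} (α : ∀ Ψ' : C, (Ψ' ⟶ Ψ) → S.T Ψ' → S.T Ψ' → Prop)
    (hα : S.IsValuePER α) (M M' : S.T Ψ)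
    (Sset : ∀ Ψ' : C, Set (Ψ' ⟶ Ψ))
    (hclosed : ∀ (Ψ' : C) (ψ : Ψ' ⟶ Ψ), ψ ∈ Sset Ψ' →
        ∀ (Ψ'' : C) (ψ' : Ψ'' ⟶ Ψ'), ψ' ≫ ψ ∈ Sset Ψ'')
    (h : ∀ (Ψ' : C) (ψ : Ψ' ⟶ Ψ), ψ ∈ Sset Ψ' → ∃ M'' : S.T Ψ',
        Relation.ReflTransGen S.step (S.sub ψ M) M'' ∧
        S.Tm α ψ M'' (S.sub ψ M')) :
    ∀ (Ψ' : C) (ψ : Ψ' ⟶ Ψ), ψ ∈ Sset Ψ' →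
      S.Tm α ψ (S.sub ψ M) (S.sub ψ M') := by
  intro Ψ' ψ hψ Ψ₁ Ψ₂ ψ₁ ψ₂
  obtain ⟨hsymm, htrans, -⟩ := hα
  have hψ₁ := hclosed _ ψ hψ _ ψ₁
  obtain ⟨P, hMP, hP⟩ := h _ _ hψ₁
  obtain ⟨Q, hMQ, hQ⟩ := h _ _ (hclosed _ _ hψ₁ _ ψ₂)
  obtain ⟨M₁, M₂, -, M₁', M₂', M₁₂', e₁, e₂, -, e₁', e₂', e₁₂', a, -, a'⟩ := hP _ _ (𝟙 _) ψ₂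
  obtain ⟨-, N₂, N₁₂, -, N₂', N₁₂', -, -, f₁₂, -, -, f₁₂', b, c, b'⟩ := hQ _ _ (𝟙 _) (𝟙 _)
  simp only [S.sub_id, S.sub_comp, Category.id_comp, Category.comp_id] at *
  obtain rfl := e₁₂'.unique f₁₂'
  refine ⟨M₁, M₂, N₁₂, M₁', M₂', M₁₂', .expand hMP e₁, e₂, ?_, e₁', e₂', ?_, a, ?_, a'⟩
  · simpa only [Category.assoc] using TermSystem.Eval.expand hMQ f₁₂
  · simpa only [Category.assoc] using e₁₂'
  · -- `M₂ ~ M₂' ~ M₁₂' ~ N₂' ~ N₂ ~ N₁₂`, where `M₁₂'` is the shared value of `M'`.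
    exact htrans _ _ _ _ _ a <| htrans _ _ _ _ _ a' <| htrans _ _ _ _ _ (hsymm _ _ _ _ b') <|
      htrans _ _ _ _ _ (hsymm _ _ _ _ b) c
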